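/- arXiv:1410.3056 — 2 statements merged into one kernel-verified Lean document; each statement's English description precedes it below -/
import Mathlib

section
/- Let H_i, H_j : ℝ^d × ℝ → ℝ be C² with everywhere positive definite Hessian and superlinear, and let A : ℝ^d → ℝ be C² with everywhere positive definite Hessian and satisfy A(p') ≥ max(min_p H_i(p',p), min_p H_j(p',p)) for all p'. For Z = (z', z_i, z_j) ∈ ℝ^d × [0,+∞) × (−∞,0], set 𝔊(Z) = sup { p'·z' + p_i z_i + p_j z_j − λ : H_i(p',p_i) = H_j(p',p_j) = λ ≥ A(p') }. Then for every z' ∈ ℝ^d and z_j ≤ 0, 𝔊(z', 0, z_j) = sup_{(q',q_j) ∈ ℝ^d × ℝ} ( q'·z' + q_j z_j − max(H_j(q',q_j), A(q')) ), i.e. the restriction of 𝔊 to {z_i = 0} equals the Legendre–Fenchel transform of (q',q_j) ↦ max(H_j(q',q_j), A(q')). -/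
/-!
Fix `z'` and `zj ≤ 0`. A point admissible on the left has `Hj (q', qj) = μ ≥ A q'`, hence
`μ = max (Hj (q', qj)) (A q')`, so every value on the left is a value on the right. Conversely,
start from `(q', qj)` and put `μ = max (Hj (q', qj)) (A q')`. As `Hj (q', ·)` is continuous and
tends to `+∞` at `-∞`, some `q ≤ qj` satisfies `Hj (q', q) = μ`, and moving `qj` down to `q` does
not decrease `qj * zj` because `zj ≤ 0`. As `μ ≥ A q' ≥ min Hi (q', ·)`, the level `μ` is also
attained by `Hi (q', ·)`, at a point that does not enter the value since `z_i = 0`. So the two sets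
of values are cofinal in each other and have the same supremum.
-/

open scoped RealInnerProductSpace

/-- A superlinear function eventually dominates `|p|` along each slice `{p'} × ℝ`. -/
lemma slice_growth {E : Type*} [NormedAddCommGroup E] {H : E × ℝ → ℝ}
    (hsup : ∀ M : ℝ, ∃ R : ℝ, ∀ P : E × ℝ, R ≤ ‖P‖ → M * ‖P‖ ≤ H P) (p' : E) :
    ∃ R : ℝ, ∀ p : ℝ, R ≤ |p| → |p| ≤ H (p', p) := by
  obtain ⟨R, hR⟩ := hsup 1
  refine ⟨R, fun p hp => ?_⟩
  have h1 : |p| ≤ ‖(p', p)‖ := norm_snd_le (p', p)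
  have h2 := hR (p', p) (hp.trans h1)
  linarith

/-- The infimum over a slice is attained, so every level above it bounds some value. -/
lemma exists_slice_le {E : Type*} [NormedAddCommGroup E] {H : E × ℝ → ℝ} (hc : Continuous H)
    (hsup : ∀ M : ℝ, ∃ R : ℝ, ∀ P : E × ℝ, R ≤ ‖P‖ → M * ‖P‖ ≤ H P) (p' : E) {c : ℝ}
    (h : (⨅ p : ℝ, H (p', p)) ≤ c) : ∃ p : ℝ, H (p', p) ≤ c := by
  obtain ⟨R, hR⟩ := slice_growth hsup p'
  have hlim : Filter.Tendsto (fun p : ℝ => H (p', p)) (Filter.cocompact ℝ) Filter.atTop := by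
    have habs := tendsto_norm_cocompact_atTop (E := ℝ)
    refine Filter.tendsto_atTop_mono' _ ?_ habs
    filter_upwards [habs.eventually_ge_atTop R] with p hp using hR p hp
  have hcont : Continuous fun p : ℝ => H (p', p) := by fun_prop
  obtain ⟨p, hp⟩ := hcont.exists_forall_le hlim
  exact ⟨p, (le_ciInf hp).trans h⟩

/-- Every level above `H (p', p₀)` is attained on the slice to the left of `p₀`. -/
lemma exists_slice_eq {E : Type*} [NormedAddCommGroup E] {H : E × ℝ → ℝ} (hc : Continuous H)
    (hsup : ∀ M : ℝ, ∃ R : ℝ, ∀ P : E × ℝ, R ≤ ‖P‖ → M * ‖P‖ ≤ H P) (p' : E) {p₀ c : ℝ}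
    (h : H (p', p₀) ≤ c) : ∃ p ≤ p₀, H (p', p) = c := by
  obtain ⟨R, hR⟩ := slice_growth hsup p'
  have hcont : Continuous fun p : ℝ => H (p', p) := by fun_prop
  obtain ⟨b, hb₀, hbR, hbc⟩ : ∃ b ≤ p₀, R ≤ |b| ∧ c ≤ |b| := by
    refine ⟨min p₀ (-max R c), min_le_left _ _, ?_⟩
    have h1 : max R c ≤ |min p₀ (-max R c)| :=
      (le_neg.mp (min_le_right p₀ (-max R c))).trans (neg_le_abs _)
    exact ⟨(le_max_left _ _).trans h1, (le_max_right _ _).trans h1⟩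
  obtain ⟨p, hp, hpc⟩ :=
    intermediate_value_Icc' hb₀ hcont.continuousOn ⟨h, hbc.trans (hR b hbR)⟩
  exact ⟨p, hp.2, hpc⟩

/-- `𝔊` at the boundary, ij-version: for smooth uniformly convex
superlinear `Hi, Hj` and smooth uniformly convex `A ≥ max(min Hi, min Hj)`, the restriction
of `𝔊` to `{z_i = 0}` equals the Legendre–Fenchel transform of
`(q', q_j) ↦ max (Hj (q', q_j)) (A q')`. -/
theorem vertex_G_boundary_ij (d : ℕ)
    (Hi Hj : EuclideanSpace ℝ (Fin d) × ℝ → ℝ)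
    (hC2i : ContDiff ℝ 2 Hi) (hC2j : ContDiff ℝ 2 Hj)
    (hposi : ∀ P v : EuclideanSpace ℝ (Fin d) × ℝ, v ≠ 0 →
      0 < iteratedFDeriv ℝ 2 Hi P ![v, v])
    (hposj : ∀ P v : EuclideanSpace ℝ (Fin d) × ℝ, v ≠ 0 →
      0 < iteratedFDeriv ℝ 2 Hj P ![v, v])
    (hsupi : ∀ M : ℝ, ∃ R : ℝ, ∀ P : EuclideanSpace ℝ (Fin d) × ℝ, R ≤ ‖P‖ → M * ‖P‖ ≤ Hi P)
    (hsupj : ∀ M : ℝ, ∃ R : ℝ, ∀ P : EuclideanSpace ℝ (Fin d) × ℝ, R ≤ ‖P‖ → M * ‖P‖ ≤ Hj P)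
    (A : EuclideanSpace ℝ (Fin d) → ℝ)
    (hAC2 : ContDiff ℝ 2 A)
    (hApos : ∀ p' v : EuclideanSpace ℝ (Fin d), v ≠ 0 →
      0 < iteratedFDeriv ℝ 2 A p' ![v, v])
    (hAbound : ∀ p' : EuclideanSpace ℝ (Fin d),
      (⨅ p : ℝ, Hi (p', p)) ≤ A p' ∧ (⨅ p : ℝ, Hj (p', p)) ≤ A p') :
    ∀ (z' : EuclideanSpace ℝ (Fin d)) (zj : ℝ), zj ≤ 0 →
      sSup {v : ℝ | ∃ (q' : EuclideanSpace ℝ (Fin d)) (qi qj mu : ℝ),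
          Hi (q', qi) = mu ∧ Hj (q', qj) = mu ∧ A q' ≤ mu ∧
          v = ⟪q', z'⟫ + qi * (0 : ℝ) + qj * zj - mu}
      = sSup {v : ℝ | ∃ (q' : EuclideanSpace ℝ (Fin d)) (qj : ℝ),
          v = ⟪q', z'⟫ + qj * zj - max (Hj (q', qj)) (A q')} := by
  intro z' zj hzj
  -- This lemma needs neither nonemptiness nor boundedness of the two sets.
  apply csSup_eq_csSup_of_forall_exists_le
  · rintro v ⟨q', qi, qj, mu, -, hj, hA, rfl⟩
    refine ⟨_, ⟨q', qj, rfl⟩, ?_⟩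
    rw [hj, max_eq_left hA]
    linarith
  · rintro v ⟨q', qj, rfl⟩
    obtain ⟨q, hq, hqe⟩ :=
      exists_slice_eq hC2j.continuous hsupj q' (le_max_left (Hj (q', qj)) (A q'))
    have hA := le_max_right (Hj (q', qj)) (A q')
    obtain ⟨r, hr⟩ := exists_slice_le hC2i.continuous hsupi q' ((hAbound q').1.trans hA)
    obtain ⟨qi, -, hqi⟩ := exists_slice_eq hC2i.continuous hsupi q' hr
    refine ⟨_, ⟨q', qi, q, _, hqi, hqe, hA, rfl⟩, ?_⟩
    have := mul_le_mul_of_nonpos_right hq hzj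
    linarith
end

section
/- Let T > 0 and let H : ℝ^d × ℝ → ℝ be continuous, quasiconvex and coercive. Let u : (0,T) × ℝ^d × [0,+∞) → ℝ be lower semicontinuous and a viscosity supersolution of u_t + H(D'u, ∂_x u) = 0 in (0,T) × ℝ^d × (0,+∞), meaning: for every C¹ function ψ and every point of (0,T) × ℝ^d × (0,+∞) at which u − ψ attains a local minimum with equality, ∂_t ψ + H(D'ψ, ∂_x ψ) ≥ 0 at that point. Let φ be C¹ on (0,T) × ℝ^d × [0,+∞) and suppose u − φ attains a local minimum at P_0 = (t_0, x_0', 0) with t_0 ∈ (0,T) and u(P_0) = φ(P_0). Define p̄ = sup { q ∈ [0,+∞) : ∃ r > 0 such that φ(t,x',x) + q x ≤ u(t,x',x) for all (t,x',x) ∈ B_r(P_0) ∩ ((0,T) × ℝ^d × [0,+∞)) } ∈ [0,+∞]. If p̄ < +∞, then ∂_t φ(P_0) + H(D'φ(P_0), ∂_x φ(P_0) + p̄) ≥ 0. -/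
/-!
Suppose `φ` touches `u` from below at `P₀` and write `p̄` for the critical slope. Fix `ε > 0`.
Since `p̄` is the supremum, `φ + (p̄ - ε) x ≤ u` near `P₀`, while `φ + (p̄ + ε) x ≤ u` fails at
points arbitrarily close to `P₀`. Lower the function `φ + (p̄ + ε) x` by a smooth penalty that
vanishes on `B_δ(P₀)` and equals `4 ε δ` on the sphere of radius `2 δ`; it is the rescaling
`4 ε δ (1 - g((P - P₀) / δ))` of one fixed bump `g`, so its gradient is `O(ε)` uniformly in `δ`.
The difference of `u` and the lowered function is negative somewhere in `B_δ(P₀)`, but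
nonnegative on the sphere of radius `2 δ` (as `2 ε x ≤ 4 ε δ` there) and on the boundary `x = 0`.
Its minimum over the closed half-ball is therefore attained at a point with `x > 0`, inside the
ball, where the supersolution inequality applies (`exists_nearby_supersolution_slope`).

The space-time gradients thus obtained converge to the gradient of `φ + p̄ x` at `P₀` as
`ε → 0`, and the set of gradients satisfying the supersolution inequality is closed because `H`
is continuous.
-/

open Set Filter Topology

/-! ### The equation as a function of the space-time gradient -/

/-- The value `λ + H(p', p)` of the equation at a space-time gradient `L = (λ, p', p)`, with `L`
encoded as a continuous linear functional. -/
noncomputable def equationAt {d : ℕ} (H : EuclideanSpace ℝ (Fin d) × ℝ → ℝ)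
    (L : ℝ × (EuclideanSpace ℝ (Fin d) × ℝ) →L[ℝ] ℝ) : ℝ :=
  L (1, (0, 0)) + H
    ((InnerProductSpace.toDual ℝ (EuclideanSpace ℝ (Fin d))).symm
      (L.comp ((ContinuousLinearMap.inr ℝ ℝ (EuclideanSpace ℝ (Fin d) × ℝ)).comp
        (ContinuousLinearMap.inl ℝ (EuclideanSpace ℝ (Fin d)) ℝ))),
     L (0, (0, 1)))

/-- The differential of the normal coordinate `(t, x', x) ↦ x`. -/
noncomputable def dNormal (d : ℕ) : ℝ × (EuclideanSpace ℝ (Fin d) × ℝ) →L[ℝ] ℝ :=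
  (ContinuousLinearMap.snd ℝ (EuclideanSpace ℝ (Fin d)) ℝ).comp
    (ContinuousLinearMap.snd ℝ ℝ (EuclideanSpace ℝ (Fin d) × ℝ))

lemma dNormal_apply {d : ℕ} (P : ℝ × (EuclideanSpace ℝ (Fin d) × ℝ)) :
    dNormal d P = P.2.2 := rfl

lemma continuous_equationAt {d : ℕ} {H : EuclideanSpace ℝ (Fin d) × ℝ → ℝ}
    (hH : Continuous H) : Continuous (equationAt H) := by
  unfold equationAt
  refine Continuous.add (by fun_prop) (hH.comp (Continuous.prodMk ?_ (by fun_prop)))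
  refine (LinearIsometryEquiv.continuous _).comp ?_
  exact continuous_id.clm_comp continuous_const

/-- The expression in the viscosity inequality at an interior point is the equation evaluated at
the full differential of the test function. -/
lemma equationAt_fderiv {d : ℕ} (H : EuclideanSpace ℝ (Fin d) × ℝ → ℝ)
    {ψ : ℝ × (EuclideanSpace ℝ (Fin d) × ℝ) → ℝ}
    {L : ℝ × (EuclideanSpace ℝ (Fin d) × ℝ) →L[ℝ] ℝ}
    {t : ℝ} {x' : EuclideanSpace ℝ (Fin d)} {x : ℝ} (hψ : HasFDerivAt ψ L (t, (x', x))) :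
    deriv (fun s => ψ (s, (x', x))) t +
      H (gradient (fun y' => ψ (t, (y', x))) x', deriv (fun y => ψ (t, (x', y))) x)
      = equationAt H L := by
  have h1 : HasDerivAt (fun s => ψ (s, (x', x))) (L (1, (0, 0))) t :=
    hψ.comp_hasDerivAt t ((hasDerivAt_id t).prodMk (hasDerivAt_const t (x', x)))
  have h2 : HasDerivAt (fun y => ψ (t, (x', y))) (L (0, (0, 1))) x :=
    hψ.comp_hasDerivAt x
      ((hasDerivAt_const x t).prodMk ((hasDerivAt_const x x').prodMk (hasDerivAt_id x)))
  have h3 : HasFDerivAt (fun y' => ψ (t, (y', x)))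
      (L.comp ((ContinuousLinearMap.inr ℝ ℝ (EuclideanSpace ℝ (Fin d) × ℝ)).comp
        (ContinuousLinearMap.inl ℝ (EuclideanSpace ℝ (Fin d)) ℝ))) x' :=
    hψ.comp x' ((hasFDerivAt_prodMk_right t (x', x)).comp x' (hasFDerivAt_prodMk_left x' x))
  rw [h1.deriv, h2.deriv, gradient, h3.fderiv, equationAt]

/-- The counterpart of `equationAt_fderiv` at a boundary point, for a function differentiable only
from inside the domain and shifted by the slope `q` in the normal direction. -/
lemma equationAt_fderivWithin {d : ℕ} (H : EuclideanSpace ℝ (Fin d) × ℝ → ℝ) {T : ℝ}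
    {φ : ℝ × (EuclideanSpace ℝ (Fin d) × ℝ) → ℝ}
    {L : ℝ × (EuclideanSpace ℝ (Fin d) × ℝ) →L[ℝ] ℝ}
    {t : ℝ} (ht : t ∈ Ioo 0 T) {x' : EuclideanSpace ℝ (Fin d)} (q : ℝ)
    (hφ : HasFDerivWithinAt φ L
      (Ioo 0 T ×ˢ ((univ : Set (EuclideanSpace ℝ (Fin d))) ×ˢ Ici (0 : ℝ))) (t, (x', 0))) :
    deriv (fun s => φ (s, (x', 0))) t +
      H (gradient (fun y' => φ (t, (y', 0))) x',
        derivWithin (fun y => φ (t, (x', y))) (Ici 0) 0 + q)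
      = equationAt H (L + q • dNormal d) := by
  have h1 : HasDerivAt (fun s => φ (s, (x', 0))) (L (1, (0, 0))) t := by
    refine HasDerivWithinAt.hasDerivAt (s := Ioo 0 T) ?_ (isOpen_Ioo.mem_nhds ht)
    exact hφ.comp_hasDerivWithinAt t
      ((hasDerivWithinAt_id t _).prodMk (hasDerivWithinAt_const t _ (x', (0 : ℝ))))
      (t := Ioo 0 T ×ˢ ((univ : Set (EuclideanSpace ℝ (Fin d))) ×ˢ Ici (0 : ℝ)))
      (fun s hs => ⟨hs, mem_univ _, le_refl (0 : ℝ)⟩)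
  have h2 : HasDerivWithinAt (fun y => φ (t, (x', y))) (L (0, (0, 1))) (Ici 0) 0 :=
    hφ.comp_hasDerivWithinAt (0 : ℝ)
      ((hasDerivWithinAt_const 0 _ t).prodMk
        ((hasDerivWithinAt_const 0 _ x').prodMk (hasDerivWithinAt_id 0 _)))
      (t := Ioo 0 T ×ˢ ((univ : Set (EuclideanSpace ℝ (Fin d))) ×ˢ Ici (0 : ℝ)))
      (fun y hy => ⟨ht, mem_univ _, hy⟩)
  have h3 : HasFDerivAt (fun y' => φ (t, (y', 0)))
      (L.comp ((ContinuousLinearMap.inr ℝ ℝ (EuclideanSpace ℝ (Fin d) × ℝ)).comp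
        (ContinuousLinearMap.inl ℝ (EuclideanSpace ℝ (Fin d)) ℝ))) x' := by
    rw [← hasFDerivWithinAt_univ]
    exact hφ.comp x' (((hasFDerivAt_prodMk_right t (x', (0 : ℝ))).comp x'
      (hasFDerivAt_prodMk_left x' (0 : ℝ))).hasFDerivWithinAt)
      (t := Ioo 0 T ×ˢ ((univ : Set (EuclideanSpace ℝ (Fin d))) ×ˢ Ici (0 : ℝ)))
      (fun y' _ => ⟨ht, mem_univ _, le_refl (0 : ℝ)⟩)
  have h4 : (L + q • dNormal d).comp
      ((ContinuousLinearMap.inr ℝ ℝ (EuclideanSpace ℝ (Fin d) × ℝ)).comp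
        (ContinuousLinearMap.inl ℝ (EuclideanSpace ℝ (Fin d)) ℝ))
      = L.comp ((ContinuousLinearMap.inr ℝ ℝ (EuclideanSpace ℝ (Fin d) × ℝ)).comp
        (ContinuousLinearMap.inl ℝ (EuclideanSpace ℝ (Fin d)) ℝ)) := by
    ext y
    simp [dNormal_apply]
  rw [h1.deriv, h2.derivWithin (uniqueDiffOn_Ici 0 0 self_mem_Ici), gradient, h3.fderiv,
    equationAt, h4]
  simp [dNormal_apply]

/-! ### Localizing test functions -/

/-- Test functions are required to be `C¹` on the whole space; cutting off by a bump function
turns a function that is `C¹` near a point into one without changing it near that point. -/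
lemma exists_contDiff_eventuallyEq {E : Type*} [NormedAddCommGroup E] [NormedSpace ℝ E]
    [HasContDiffBump E] {φ : E → ℝ} {D : Set E} (hφ : ContDiffOn ℝ 1 φ D)
    {Q : E} (hQ : D ∈ 𝓝 Q) : ∃ f : E → ℝ, ContDiff ℝ 1 f ∧ f =ᶠ[𝓝 Q] φ := by
  obtain ⟨r, hr, hrD⟩ := Metric.isOpen_iff.1 isOpen_interior Q (mem_interior_iff_mem_nhds.2 hQ)
  let g : ContDiffBump Q := ⟨r / 4, r / 2, by linarith, by linarith⟩
  refine ⟨fun P => g P * φ P, ?_, ?_⟩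
  · rw [contDiff_iff_contDiffAt]
    intro P
    by_cases hP : P ∈ tsupport g
    · rw [g.tsupport_eq] at hP
      have hPD : D ∈ 𝓝 P := mem_interior_iff_mem_nhds.1 <| hrD <| by
        have : dist P Q ≤ r / 2 := hP
        rw [Metric.mem_ball]
        linarith
      exact g.contDiffAt.mul (hφ.contDiffAt hPD)
    · have h0 : (fun P => g P * φ P) =ᶠ[𝓝 P] fun _ => 0 := by
        filter_upwards [notMem_tsupport_iff_eventuallyEq.1 hP] with R hR
        simp [hR]
      exact contDiffAt_const.congr_of_eventuallyEq h0
  · filter_upwards [g.eventuallyEq_one] with P hP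
    simp [hP]

/-! ### Perturbing the test function into the interior -/

/-- The perturbed test function: for every `ε > 0`, some interior point `Q` within `ε` of `P₀`
carries a gradient that satisfies the supersolution inequality and differs from that of
`φ + p x` at `Q` by at most `(1 + 4 C) ε`, where `C` bounds the gradient of the fixed bump `g`.
The last two hypotheses say that `p` is the critical slope up to `ε`. -/
lemma exists_nearby_supersolution_slope {d : ℕ} {T : ℝ}
    {H : EuclideanSpace ℝ (Fin d) × ℝ → ℝ}
    {u : ℝ × (EuclideanSpace ℝ (Fin d) × ℝ) → ℝ}
    {D : Set (ℝ × (EuclideanSpace ℝ (Fin d) × ℝ))}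
    (hD : D = Ioo 0 T ×ˢ ((univ : Set (EuclideanSpace ℝ (Fin d))) ×ˢ Ici (0 : ℝ)))
    (hlsc : LowerSemicontinuousOn u D)
    (hsuper : ∀ ψ : ℝ × (EuclideanSpace ℝ (Fin d) × ℝ) → ℝ, ContDiff ℝ 1 ψ →
      ∀ Q ∈ D, 0 < Q.2.2 → u Q = ψ Q → (∀ᶠ P in 𝓝 Q, ψ P ≤ u P) →
      0 ≤ equationAt H (fderiv ℝ ψ Q))
    {φ : ℝ × (EuclideanSpace ℝ (Fin d) × ℝ) → ℝ} (hφ : ContDiffOn ℝ 1 φ D)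
    {P₀ : ℝ × (EuclideanSpace ℝ (Fin d) × ℝ)} (ht₀ : P₀.1 ∈ Ioo 0 T) (hx₀ : P₀.2.2 = 0)
    (g : ContDiffBump (0 : ℝ × (EuclideanSpace ℝ (Fin d) × ℝ)))
    (hgin : g.rIn = 1) (hgout : g.rOut = 2) {C : ℝ} (hC : ∀ P, ‖fderiv ℝ g P‖ ≤ C)
    {p ε : ℝ} (hε : 0 < ε)
    (hlow : ∃ r > 0, ∀ P ∈ Metric.ball P₀ r ∩ D, φ P + (p - ε) * P.2.2 ≤ u P)
    (hhigh : ∀ r > 0, ∃ P ∈ Metric.ball P₀ r ∩ D, u P < φ P + (p + ε) * P.2.2) :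
    ∃ Q ∈ D, dist Q P₀ ≤ ε ∧ ∃ M : ℝ × (EuclideanSpace ℝ (Fin d) × ℝ) →L[ℝ] ℝ,
      0 ≤ equationAt H M ∧ ‖M - (fderivWithin ℝ φ D Q + p • dNormal d)‖ ≤ (1 + 4 * C) * ε := by
  obtain ⟨r, hr, hlow⟩ := hlow
  obtain ⟨s, hs, hsT⟩ := Metric.isOpen_iff.1 isOpen_Ioo P₀.1 ht₀
  obtain ⟨δ, hδ, hδr, hδs, hδε⟩ : ∃ δ > 0, 2 * δ < r ∧ 2 * δ < s ∧ 2 * δ ≤ ε := by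
    refine ⟨min r (min s ε) / 4, by positivity, ?_, ?_, ?_⟩
    all_goals
      have h1 := min_le_left r (min s ε)
      have h2 := min_le_right r (min s ε)
      have h3 := min_le_left s ε
      have h4 := min_le_right s ε
      have h5 : 0 < min r (min s ε) := by positivity
      linarith
  -- the part of the test function added to `φ`: its slope and the rescaled penalty
  let w : ℝ × (EuclideanSpace ℝ (Fin d) × ℝ) → ℝ := fun P =>
    (p + ε) * P.2.2 + 4 * ε * δ * (g (δ⁻¹ • (P - P₀)) - 1)
  have hw : ContDiff ℝ 1 w := by
    have := g.contDiff (n := 1)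
    fun_prop
  have hw' : ∀ Q, HasFDerivAt w ((p + ε) • dNormal d +
      (4 * ε) • fderiv ℝ g (δ⁻¹ • (Q - P₀))) Q := by
    intro Q
    have h1 : HasFDerivAt (fun P : ℝ × (EuclideanSpace ℝ (Fin d) × ℝ) => δ⁻¹ • (P - P₀))
        (δ⁻¹ • ContinuousLinearMap.id ℝ _) Q :=
      ((hasFDerivAt_id Q).sub_const P₀).const_smul δ⁻¹
    have h2 : HasFDerivAt g (fderiv ℝ g (δ⁻¹ • (Q - P₀))) (δ⁻¹ • (Q - P₀)) :=
      ((g.contDiff (n := 1)).differentiable one_ne_zero _).hasFDerivAt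
    have h3 := ((dNormal d).hasFDerivAt (x := Q)).const_mul (p + ε)
    have h4 := ((h2.comp Q h1).sub_const 1).const_mul (4 * ε * δ)
    refine (h3.add h4).congr_fderiv ?_
    ext <;> simp <;> field_simp
  let K := Metric.closedBall P₀ (2 * δ) ∩ {P | 0 ≤ P.2.2}
  have hKD : K ⊆ D := by
    rintro P ⟨hP, hx⟩
    rw [hD]
    refine ⟨hsT ?_, mem_univ _, hx⟩
    have h1 : dist P.1 P₀.1 ≤ dist P P₀ := le_max_left _ _
    have h2 : dist P P₀ ≤ 2 * δ := hP
    rw [Metric.mem_ball]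
    linarith
  have hKc : IsCompact K := (isCompact_closedBall P₀ (2 * δ)).inter_right
    (isClosed_le continuous_const (by fun_prop))
  have hDx : ∀ P ∈ D, 0 ≤ P.2.2 := by
    intro P hP
    rw [hD] at hP
    exact hP.2.2
  obtain ⟨P₁, ⟨hP₁b, hP₁D⟩, hP₁⟩ := hhigh δ hδ
  have hP₁b' : dist P₁ P₀ < δ := hP₁b
  have hP₁K : P₁ ∈ K := ⟨by rw [Metric.mem_closedBall]; linarith, hDx P₁ hP₁D⟩
  have hv : LowerSemicontinuousOn (fun P => u P + -(φ P + w P)) K :=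
    (hlsc.mono hKD).add
      ((hφ.continuousOn.mono hKD).add hw.continuous.continuousOn).neg.lowerSemicontinuousOn
  obtain ⟨Q, hQK, hQmin⟩ := hv.exists_isMinOn ⟨P₁, hP₁K⟩ hKc
  have hnorm : ∀ P, ‖δ⁻¹ • (P - P₀)‖ = dist P P₀ / δ := by
    intro P
    rw [norm_smul, Real.norm_of_nonneg (by positivity), dist_eq_norm]
    field_simp
  -- `P₁` lies in the region without penalty, so the minimum is negative
  have hneg : u Q + -(φ Q + w Q) < 0 := by
    refine lt_of_le_of_lt (hQmin hP₁K) ?_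
    have h1 : g (δ⁻¹ • (P₁ - P₀)) = 1 := by
      apply g.one_of_mem_closedBall
      rw [mem_closedBall_zero_iff, hnorm, hgin, div_le_one hδ]
      exact hP₁b'.le
    simp only [w, h1]
    linarith
  have hQlow : φ Q + (p - ε) * Q.2.2 ≤ u Q := by
    refine hlow Q ⟨?_, hKD hQK⟩
    have : dist Q P₀ ≤ 2 * δ := hQK.1
    rw [Metric.mem_ball]
    linarith
  have hQx : 0 < Q.2.2 := by
    refine lt_of_le_of_ne hQK.2 fun h0 => ?_
    have h1 : 4 * ε * δ * (g (δ⁻¹ • (Q - P₀)) - 1) ≤ 0 :=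
      mul_nonpos_of_nonneg_of_nonpos (by positivity) (by linarith [g.le_one (x := δ⁻¹ • (Q - P₀))])
    simp only [w, ← h0] at hneg hQlow
    linarith
  have hQb : dist Q P₀ < 2 * δ := by
    refine lt_of_le_of_ne hQK.1 fun h0 => ?_
    have h1 : g (δ⁻¹ • (Q - P₀)) = 0 := by
      apply g.zero_of_le_dist
      rw [dist_zero_right, hnorm, h0, hgout]
      field_simp
      exact le_refl _
    have h2 : Q.2.2 ≤ 2 * δ := by
      have h3 : dist Q.2.2 P₀.2.2 ≤ dist Q P₀ := (le_max_right _ _).trans (le_max_right _ _)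
      rw [hx₀, dist_zero_right, h0] at h3
      exact (le_abs_self _).trans h3
    simp only [w, h1] at hneg
    nlinarith
  have hKQ : K ∈ 𝓝 Q := by
    have h1 : Metric.closedBall P₀ (2 * δ) ∈ 𝓝 Q :=
      mem_of_superset (Metric.isOpen_ball.mem_nhds hQb) Metric.ball_subset_closedBall
    have h2 : {P : ℝ × (EuclideanSpace ℝ (Fin d) × ℝ) | 0 ≤ P.2.2} ∈ 𝓝 Q :=
      mem_of_superset ((isOpen_lt continuous_const (continuous_snd.comp continuous_snd)).mem_nhds hQx)
        (fun P (hP : 0 < P.2.2) => hP.le)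
    exact inter_mem h1 h2
  have hDQ : D ∈ 𝓝 Q := mem_of_superset hKQ hKD
  obtain ⟨f, hf, hfφ⟩ := exists_contDiff_eventuallyEq hφ hDQ
  let ψ : ℝ × (EuclideanSpace ℝ (Fin d) × ℝ) → ℝ := fun P =>
    f P + w P + (u Q + -(φ Q + w Q))
  have hψ' : HasFDerivAt ψ (fderivWithin ℝ φ D Q + ((p + ε) • dNormal d +
      (4 * ε) • fderiv ℝ g (δ⁻¹ • (Q - P₀)))) Q := by
    have h1 : HasFDerivAt φ (fderivWithin ℝ φ D Q) Q := by
      rw [fderivWithin_of_mem_nhds hDQ]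
      exact ((hφ.contDiffAt hDQ).differentiableAt one_ne_zero).hasFDerivAt
    exact ((h1.congr_of_eventuallyEq hfφ).add (hw' Q)).add_const _
  refine ⟨Q, hKD hQK, by linarith, fderivWithin ℝ φ D Q + ((p + ε) • dNormal d +
    (4 * ε) • fderiv ℝ g (δ⁻¹ • (Q - P₀))), ?_, ?_⟩
  · rw [← hψ'.fderiv]
    refine hsuper ψ (by fun_prop) Q (hKD hQK) hQx ?_ ?_
    · simp only [ψ, hfφ.self_of_nhds]
      ring
    · filter_upwards [hKQ, hfφ] with P hPK hPf
      have h1 : u Q + -(φ Q + w Q) ≤ u P + -(φ P + w P) := hQmin hPK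
      simp only [ψ, hPf]
      linarith
  · have h1 : fderivWithin ℝ φ D Q + ((p + ε) • dNormal d +
        (4 * ε) • fderiv ℝ g (δ⁻¹ • (Q - P₀))) - (fderivWithin ℝ φ D Q + p • dNormal d)
        = ε • dNormal d + (4 * ε) • fderiv ℝ g (δ⁻¹ • (Q - P₀)) := by
      module
    have h2 : ‖dNormal d‖ ≤ 1 := by
      refine ContinuousLinearMap.opNorm_le_bound _ zero_le_one fun P => ?_
      rw [one_mul, dNormal_apply]
      exact (norm_snd_le P.2).trans (norm_snd_le P)
    rw [h1]
    calc _ ≤ ‖ε • dNormal d‖ + ‖(4 * ε) • fderiv ℝ g (δ⁻¹ • (Q - P₀))‖ := norm_add_le _ _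
      _ = ε * ‖dNormal d‖ + 4 * ε * ‖fderiv ℝ g (δ⁻¹ • (Q - P₀))‖ := by
        rw [norm_smul, norm_smul, Real.norm_of_nonneg hε.le,
          Real.norm_of_nonneg (by positivity)]
      _ ≤ ε * 1 + 4 * ε * C := by gcongr; exact hC _
      _ = _ := by ring


/-! ### Passage to the limit -/

/-- Critical slope for supersolutions: let `u` be a lower semicontinuous
viscosity supersolution of `u_t + H(D'u, ∂_x u) = 0` in `(0,T) × ℝ^d × (0,+∞)` with `H`
continuous, quasiconvex and coercive, and let `φ`, C¹ on `(0,T) × ℝ^d × [0,+∞)`, touch `u`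
from below at `P₀ = (t₀, x₀', 0)`. If the critical slope
`p̄ = sup {q ≥ 0 : ∃ r > 0, φ + q x ≤ u on B_r(P₀) ∩ dom}` is finite (the set is bounded
above), then `∂_t φ(P₀) + H(D'φ(P₀), ∂_x φ(P₀) + p̄) ≥ 0`. -/
theorem critical_slope_supersolution (d : ℕ) (T : ℝ) (hT : 0 < T)
    (H : EuclideanSpace ℝ (Fin d) × ℝ → ℝ)
    (hcont : Continuous H)
    (hqc : ∀ lam : ℝ, Convex ℝ {P : EuclideanSpace ℝ (Fin d) × ℝ | H P ≤ lam})
    (hcoer : ∀ M : ℝ, ∃ R : ℝ, ∀ P : EuclideanSpace ℝ (Fin d) × ℝ, R ≤ ‖P‖ → M ≤ H P)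
    (u : ℝ × (EuclideanSpace ℝ (Fin d) × ℝ) → ℝ)
    (hlsc : LowerSemicontinuousOn u
      (Set.Ioo 0 T ×ˢ ((Set.univ : Set (EuclideanSpace ℝ (Fin d))) ×ˢ Set.Ici (0 : ℝ))))
    (hsuper : ∀ ψ : ℝ × (EuclideanSpace ℝ (Fin d) × ℝ) → ℝ, ContDiff ℝ 1 ψ →
      ∀ (t : ℝ) (x' : EuclideanSpace ℝ (Fin d)) (x : ℝ), t ∈ Set.Ioo 0 T → 0 < x →
      u (t, (x', x)) = ψ (t, (x', x)) →
      (∀ᶠ q in nhdsWithin (t, (x', x))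
          (Set.Ioo 0 T ×ˢ ((Set.univ : Set (EuclideanSpace ℝ (Fin d))) ×ˢ Set.Ioi (0:ℝ))),
        ψ q ≤ u q) →
      0 ≤ deriv (fun s => ψ (s, (x', x))) t +
          H (gradient (fun y' => ψ (t, (y', x))) x',
             deriv (fun y => ψ (t, (x', y))) x))
    (φ : ℝ × (EuclideanSpace ℝ (Fin d) × ℝ) → ℝ)
    (hφ : ContDiffOn ℝ 1 φ
      (Set.Ioo 0 T ×ˢ ((Set.univ : Set (EuclideanSpace ℝ (Fin d))) ×ˢ Set.Ici (0 : ℝ))))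
    (t₀ : ℝ) (ht₀ : t₀ ∈ Set.Ioo 0 T) (x₀' : EuclideanSpace ℝ (Fin d))
    (htouch : u (t₀, (x₀', 0)) = φ (t₀, (x₀', 0)))
    (hmin : ∀ᶠ q in nhdsWithin (t₀, (x₀', (0 : ℝ)))
        (Set.Ioo 0 T ×ˢ ((Set.univ : Set (EuclideanSpace ℝ (Fin d))) ×ˢ Set.Ici (0 : ℝ))),
      φ q ≤ u q)
    (hbdd : BddAbove {q : ℝ | 0 ≤ q ∧ ∃ r > 0,
      ∀ p ∈ Metric.ball ((t₀, (x₀', (0 : ℝ))) : ℝ × (EuclideanSpace ℝ (Fin d) × ℝ)) r ∩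
        (Set.Ioo 0 T ×ˢ ((Set.univ : Set (EuclideanSpace ℝ (Fin d))) ×ˢ Set.Ici (0 : ℝ))),
        φ p + q * p.2.2 ≤ u p}) :
    0 ≤ deriv (fun s => φ (s, (x₀', 0))) t₀ +
        H (gradient (fun y' => φ (t₀, (y', 0))) x₀',
           derivWithin (fun y => φ (t₀, (x₀', y))) (Set.Ici 0) 0 +
             sSup {q : ℝ | 0 ≤ q ∧ ∃ r > 0,
               ∀ p ∈ Metric.ball ((t₀, (x₀', (0 : ℝ))) :
                   ℝ × (EuclideanSpace ℝ (Fin d) × ℝ)) r ∩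
                 (Set.Ioo 0 T ×ˢ ((Set.univ : Set (EuclideanSpace ℝ (Fin d))) ×ˢ
                   Set.Ici (0 : ℝ))),
                 φ p + q * p.2.2 ≤ u p}) := by
  set D : Set (ℝ × (EuclideanSpace ℝ (Fin d) × ℝ)) :=
    Ioo 0 T ×ˢ ((univ : Set (EuclideanSpace ℝ (Fin d))) ×ˢ Ici (0 : ℝ)) with hD
  set P₀ : ℝ × (EuclideanSpace ℝ (Fin d) × ℝ) := (t₀, (x₀', 0)) with hP₀
  set S : Set ℝ := {q : ℝ | 0 ≤ q ∧ ∃ r > 0, ∀ p ∈ Metric.ball P₀ r ∩ D,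
    φ p + q * p.2.2 ≤ u p} with hS
  have hP₀D : P₀ ∈ D := ⟨ht₀, mem_univ _, le_refl (0 : ℝ)⟩
  have hDx : ∀ P ∈ D, 0 ≤ P.2.2 := fun P hP => hP.2.2
  have hS0 : (0 : ℝ) ∈ S := by
    obtain ⟨r, hr, h⟩ := Metric.mem_nhdsWithin_iff.1 hmin
    refine ⟨le_refl _, r, hr, fun P hP => ?_⟩
    rw [zero_mul, add_zero]
    exact h hP
  have hsup0 : 0 ≤ sSup S := le_csSup hbdd hS0
  have hlow : ∀ ε > 0, ∃ r > 0, ∀ P ∈ Metric.ball P₀ r ∩ D,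
      φ P + (sSup S - ε) * P.2.2 ≤ u P := by
    intro ε hε
    obtain ⟨q, ⟨_, r, hr, hq⟩, hlt⟩ :=
      exists_lt_of_lt_csSup ⟨0, hS0⟩ (sub_lt_self (sSup S) hε)
    refine ⟨r, hr, fun P hP => le_trans ?_ (hq P hP)⟩
    have := mul_le_mul_of_nonneg_right hlt.le (hDx P hP.2)
    linarith
  have hhigh : ∀ ε > 0, ∀ r > 0, ∃ P ∈ Metric.ball P₀ r ∩ D,
      u P < φ P + (sSup S + ε) * P.2.2 := by
    intro ε hε r hr
    by_contra! hcon
    have : sSup S + ε ≤ sSup S := le_csSup hbdd ⟨by linarith, r, hr, hcon⟩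
    linarith
  have hsuper' : ∀ ψ : ℝ × (EuclideanSpace ℝ (Fin d) × ℝ) → ℝ, ContDiff ℝ 1 ψ →
      ∀ Q ∈ D, 0 < Q.2.2 → u Q = ψ Q → (∀ᶠ P in 𝓝 Q, ψ P ≤ u P) →
      0 ≤ equationAt H (fderiv ℝ ψ Q) := by
    rintro ψ hψ ⟨t, x', x⟩ hQ hx heq hle
    rw [← equationAt_fderiv H (hψ.differentiable one_ne_zero _).hasFDerivAt]
    exact hsuper ψ hψ t x' x hQ.1 hx heq (hle.filter_mono nhdsWithin_le_nhds)
  have hDu : UniqueDiffOn ℝ D :=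
    (uniqueDiffOn_Ioo 0 T).prod (uniqueDiffOn_univ.prod (uniqueDiffOn_Ici 0))
  rw [equationAt_fderivWithin H ht₀ (sSup S)
    ((hφ.differentiableOn one_ne_zero) P₀ hP₀D).hasFDerivWithinAt]
  have hcl : IsClosed {L | 0 ≤ equationAt H L} :=
    isClosed_le continuous_const (continuous_equationAt hcont)
  refine hcl.closure_subset (Metric.mem_closure_iff.2 fun η hη => ?_)
  let g : ContDiffBump (0 : ℝ × (EuclideanSpace ℝ (Fin d) × ℝ)) :=
    ⟨1, 2, one_pos, one_lt_two⟩
  obtain ⟨C, hC⟩ : ∃ C, ∀ P, ‖fderiv ℝ g P‖ ≤ C :=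
    (g.hasCompactSupport.fderiv (𝕜 := ℝ)).exists_bound_of_continuous
      ((g.contDiff (n := 1)).continuous_fderiv one_ne_zero)
  have hC0 : 0 ≤ C := (norm_nonneg _).trans (hC 0)
  obtain ⟨ρ, hρ, hclose⟩ := Metric.continuousWithinAt_iff.1
    (hφ.continuousOn_fderivWithin hDu (le_refl 1) P₀ hP₀D) (η / 2) (by positivity)
  obtain ⟨ε, hε, hερ, hεη⟩ : ∃ ε > 0, ε < ρ ∧ (1 + 4 * C) * ε ≤ η / 2 := by
    refine ⟨min (ρ / 2) (η / 2 / (1 + 4 * C)), by positivity, ?_, ?_⟩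
    · exact (min_le_left _ _).trans_lt (by linarith)
    · rw [mul_comm, ← le_div_iff₀ (by positivity)]
      exact min_le_right _ _
  obtain ⟨Q, hQD, hQ, M, hM, hMQ⟩ := exists_nearby_supersolution_slope hD hlsc hsuper' hφ
    (P₀ := P₀) ht₀ rfl g rfl rfl hC hε (hlow ε hε) (hhigh ε hε)
  refine ⟨M, hM, ?_⟩
  have h1 := hclose hQD (hQ.trans_lt hερ)
  rw [← dist_eq_norm] at hMQ
  calc _ ≤ dist (fderivWithin ℝ φ D P₀ + sSup S • dNormal d)
          (fderivWithin ℝ φ D Q + sSup S • dNormal d) +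
        dist (fderivWithin ℝ φ D Q + sSup S • dNormal d) M := dist_triangle _ _ _
    _ < η / 2 + η / 2 := by
        rw [dist_add_right, dist_comm, dist_comm _ M]
        linarith
    _ = η := by ring
end
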